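/- arXiv:math/0412354 — 2 statements merged into one kernel-verified Lean document; each statement's English description precedes it below -/
import Mathlib

section
/- Let K be a field of characteristic 0 equipped with a derivation D and let F be a differential subfield of K. Then the set L = {b ∈ K : b is differentially algebraic over F} is a differential subfield of K containing F; that is, L contains F, L is closed under addition, multiplication, negation, and inversion of nonzero elements, and L is closed under the derivation D. -/
/-- `b ∈ K` is differentially algebraic over the differential subfield `F` of `K`:
there are `n ∈ ℕ` and a nonzero polynomial in `n + 1` variables with coefficients in `F`
vanishing at `(b, Db, …, Dⁿb)`. -/
def IsDifferentiallyAlgebraic {K : Type*} [Field K] (D : K → K) (F : Subfield K) (b : K) :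
    Prop :=
  ∃ (n : ℕ) (P : MvPolynomial (Fin (n + 1)) K),
    P ≠ 0 ∧ (∀ m, P.coeff m ∈ F) ∧
    MvPolynomial.eval (fun i : Fin (n + 1) => D^[i.val] b) P = 0

/-!
An element is differentially algebraic over `F` exactly when it lies in a `D`-stable subfield
of `K` containing `F` and of finite transcendence degree over `F`. Given such a subfield, the
infinitely many derivatives of the element cannot be algebraically independent. Conversely, if
`Dⁿb` is algebraic over `E = F(b, …, Dⁿ⁻¹b)`, then the algebraic closure `L` of `E` in `K` has
finite transcendence degree, and it is `D`-stable: `D` maps `E` into `L`, so modulo `L` it induces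
an `E`-linear derivation `L → K / L`, which vanishes because `L / E` is separable in
characteristic zero. The compositum of two such subfields is again of this kind, and this gives
closure under the field operations and `D`.
-/

open AlgebraicIndependent (matroid)

theorem algebraicIndependent_iff_forall_algebraicIndepOn_Iio {R A : Type*} [CommRing R]
    [CommRing A] [Algebra R A] {x : ℕ → A} :
    AlgebraicIndependent R x ↔ ∀ n, AlgebraicIndepOn R x (Set.Iio n) := by
  refine ⟨fun hx n ↦ hx.comp _ Subtype.val_injective,
    fun hx ↦ algebraicIndependent_of_finite_type fun t ht ↦ ?_⟩
  obtain ⟨n, hn⟩ := ht.bddAbove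
  exact (hx (n + 1)).mono fun i hi ↦ Nat.lt_succ_of_le (hn hi)

theorem exists_isAlgebraic_adjoin_image_Iio {R A : Type*} [CommRing R] [CommRing A]
    [Algebra R A] [FaithfulSMul R A] {x : ℕ → A} (hx : ¬ AlgebraicIndependent R x) :
    ∃ n, IsAlgebraic (Algebra.adjoin R (x '' Set.Iio n)) (x n) := by
  contrapose! hx
  refine algebraicIndependent_iff_forall_algebraicIndepOn_Iio.2 fun n ↦ ?_
  induction n with
  | zero =>
    have : IsEmpty (Set.Iio 0) := ⟨fun i ↦ Nat.not_lt_zero _ i.2⟩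
    exact algebraicIndependent_empty_type_iff.2 (FaithfulSMul.algebraMap_injective R A)
  | succ n ih =>
    rw [← Order.succ_eq_add_one, Order.Iio_succ_eq_insert]
    exact ih.insert (hx n)

theorem not_algebraicIndependent_subfield_iff {K σ : Type*} [Field K] {F : Subfield K}
    {y : σ → K} :
    ¬ AlgebraicIndependent F y ↔
      ∃ P : MvPolynomial σ K, P ≠ 0 ∧ (∀ m, P.coeff m ∈ F) ∧ MvPolynomial.eval y P = 0 := by
  have map_injective := MvPolynomial.map_injective (σ := σ) (algebraMap F K)
    (algebraMap F K).injective
  simp only [algebraicIndependent_iff, not_forall, exists_prop]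
  constructor
  · rintro ⟨Q, hQ, hQ0⟩
    refine ⟨Q.map (algebraMap F K), (map_ne_zero_iff _ map_injective).2 hQ0, fun m ↦ ?_, ?_⟩
    · rw [MvPolynomial.coeff_map]
      exact (Q.coeff m).2
    · rwa [MvPolynomial.eval_map, ← MvPolynomial.aeval_def]
  · rintro ⟨P, hP0, hPF, hP⟩
    obtain ⟨Q, rfl⟩ : P ∈ Set.range (MvPolynomial.map (algebraMap F K)) := by
      rw [MvPolynomial.mem_range_map_iff_coeffs_subset]
      intro c hc
      obtain ⟨m, -, rfl⟩ := MvPolynomial.mem_coeffs_iff.1 hc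
      exact ⟨⟨_, hPF m⟩, rfl⟩
    rw [MvPolynomial.eval_map, ← MvPolynomial.aeval_def] at hP
    exact ⟨Q, hP, (map_ne_zero_iff _ map_injective).1 hP0⟩

theorem isDifferentiallyAlgebraic_iff_not_algebraicIndependent {K : Type*} [Field K] {D : K → K}
    {F : Subfield K} {b : K} :
    IsDifferentiallyAlgebraic D F b ↔ ¬ AlgebraicIndependent F fun n : ℕ ↦ D^[n] b := by
  simp only [IsDifferentiallyAlgebraic, ← not_algebraicIndependent_subfield_iff]
  constructor
  · rintro ⟨n, hn⟩ h
    exact hn (h.comp _ Fin.val_injective)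
  · contrapose!
    intro h
    refine algebraicIndependent_iff_forall_algebraicIndepOn_Iio.2 fun n ↦ ?_
    exact (h n).comp (fun i : Set.Iio n ↦ ⟨i, Nat.lt_succ_of_lt i.2⟩)
      fun i j hij ↦ Subtype.ext (Fin.ext_iff.1 hij)

section Derivation

theorem derivation_eq_zero_of_isSeparable {k L M : Type*} [Field k] [Field L] [Algebra k L]
    [Algebra.IsSeparable k L] [AddCommGroup M] [Module L M] (d : Derivation ℤ L M)
    (hd : ∀ a : k, d (algebraMap k L a) = 0) : d = 0 := by
  let _ : Module k M := Module.compHom M (algebraMap k L)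
  have : IsScalarTower k L M := .of_algebraMap_smul fun _ _ ↦ rfl
  let dk : Derivation k L M := .mk'
    { toFun := d
      map_add' := map_add d
      map_smul' := fun a x ↦ by simp [Algebra.smul_def, hd] }
    d.leibniz
  ext x
  have derivative_smul_eq_zero : Polynomial.aeval x (minpoly k x).derivative • dk x = 0 := by
    rw [← dk.map_aeval, minpoly.aeval, map_zero]
  have derivative_ne_zero := (Algebra.IsSeparable.isSeparable k x).aeval_derivative_ne_zero
    (minpoly.aeval k x)
  exact (smul_eq_zero_iff_right derivative_ne_zero).1 derivative_smul_eq_zero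

variable {k K : Type*} [Field k] [Field K] [Algebra k K] (D : Derivation ℤ K K)
  {L : IntermediateField k K}

theorem derivation_mem_of_isSeparable [Algebra.IsSeparable k L]
    (hk : ∀ a : k, D (algebraMap k K a) ∈ L) {x : K} (hx : x ∈ L) : D x ∈ L := by
  let π : K →ₗ[L] K ⧸ LinearMap.range (Algebra.linearMap L K) := Submodule.mkQ _
  have π_eq_zero {y : K} : π y = 0 ↔ y ∈ L := by
    simp [π, Submodule.Quotient.mk_eq_zero]
  have derivation_mod_eq_zero : π.compDer (D.compAlgebraMap L) = 0 :=
    derivation_eq_zero_of_isSeparable (k := k) _ fun a ↦ π_eq_zero.2 (hk a)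
  exact π_eq_zero.1 (Derivation.congr_fun derivation_mod_eq_zero ⟨x, hx⟩)

theorem derivation_mem_of_mem_adjoin {S : Set K} (hk : ∀ a : k, D (algebraMap k K a) ∈ L)
    (hS : S ⊆ L) (hDS : ∀ s ∈ S, D s ∈ L) {x : K} (hx : x ∈ IntermediateField.adjoin k S) :
    D x ∈ L := by
  have adjoin_le : IntermediateField.adjoin k S ≤ L := IntermediateField.adjoin_le_iff.2 hS
  induction hx using IntermediateField.adjoin_induction with
  | mem s hs => exact hDS s hs
  | algebraMap a => exact hk a
  | add y z _ _ hDy hDz => simpa only [map_add] using L.add_mem hDy hDz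
  | mul y z hy hz hDy hDz =>
    rw [D.leibniz]
    exact L.add_mem (L.mul_mem (adjoin_le hy) hDz) (L.mul_mem (adjoin_le hz) hDy)
  | inv y hy hDy =>
    rw [D.leibniz_inv]
    exact L.mul_mem (L.neg_mem (pow_mem (L.inv_mem (adjoin_le hy)) 2)) hDy

end Derivation

section FiniteTranscendenceDegree

variable {k K : Type*} [Field k] [Field K] [Algebra k K]

theorem le_restrictScalars_algebraicClosure (E : IntermediateField k K) :
    E ≤ (algebraicClosure E K).restrictScalars k :=
  fun x hx ↦ (algebraicClosure E K).algebraMap_mem ⟨x, hx⟩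

theorem coe_algebraicClosure_adjoin_eq_matroid_closure (T : Set K) :
    (algebraicClosure (IntermediateField.adjoin k T) K : Set K) = (matroid k K).closure T := by
  ext x
  rw [AlgebraicIndependent.matroid_closure_eq, SetLike.mem_coe, mem_algebraicClosure_iff]
  exact IntermediateField.isAlgebraic_adjoin_iff

theorem coe_adjoin_subset_matroid_closure (T : Set K) :
    (IntermediateField.adjoin k T : Set K) ⊆ (matroid k K).closure T := by
  rw [← coe_algebraicClosure_adjoin_eq_matroid_closure]
  exact le_restrictScalars_algebraicClosure _

/-- `L / k` is a `D`-stable subextension of `K / k` of finite transcendence degree. The degree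
is bounded through the rank of `L` in the algebraic-independence matroid of `K / k`, since the
rank calculus gives composita and algebraic closures directly. -/
structure IsDiffStableOfFiniteTrdeg (D : K → K) (L : IntermediateField k K) : Prop where
  map_mem : ∀ {x}, x ∈ L → D x ∈ L
  isRkFinite : (matroid k K).IsRkFinite L

namespace IsDiffStableOfFiniteTrdeg

theorem bot {D : K → K} (hD : ∀ a : k, D (algebraMap k K a) ∈ (⊥ : IntermediateField k K)) :
    IsDiffStableOfFiniteTrdeg D (⊥ : IntermediateField k K) where
  map_mem := by
    intro x hx
    obtain ⟨a, rfl⟩ := IntermediateField.mem_bot.1 hx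
    exact hD a
  isRkFinite := by
    rw [← IntermediateField.adjoin_empty k K]
    exact (Matroid.IsRkFinite.empty _).closure.subset (coe_adjoin_subset_matroid_closure ∅)

theorem sup {D : Derivation ℤ K K} {L L' : IntermediateField k K}
    (hL : IsDiffStableOfFiniteTrdeg D L) (hL' : IsDiffStableOfFiniteTrdeg D L') :
    IsDiffStableOfFiniteTrdeg D (L ⊔ L') where
  map_mem := derivation_mem_of_mem_adjoin D
    (fun a ↦ le_sup_left (a := L) (hL.map_mem (L.algebraMap_mem a)))
    (IntermediateField.subset_adjoin k _)
    (by
      rintro s (hs | hs)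
      · exact le_sup_left (a := L) (hL.map_mem hs)
      · exact le_sup_right (a := L) (hL'.map_mem hs))
  isRkFinite := (hL.isRkFinite.union hL'.isRkFinite).closure.subset
    (coe_adjoin_subset_matroid_closure _)

theorem algebraicClosure_adjoin [CharZero k] {D : Derivation ℤ K K} {T : Set K} (hT : T.Finite)
    (hk : ∀ a : k, D (algebraMap k K a) ∈ (⊥ : IntermediateField k K))
    (hDT : ∀ t ∈ T, D t ∈ algebraicClosure (IntermediateField.adjoin k T) K) :
    IsDiffStableOfFiniteTrdeg D
      ((algebraicClosure (IntermediateField.adjoin k T) K).restrictScalars k) where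
  map_mem := by
    refine derivation_mem_of_isSeparable D
      (L := algebraicClosure (IntermediateField.adjoin k T) K) fun e ↦ ?_
    exact derivation_mem_of_mem_adjoin D (fun a ↦ bot_le (α := IntermediateField k K) (hk a))
      ((IntermediateField.subset_adjoin k T).trans (le_restrictScalars_algebraicClosure _)) hDT e.2
  isRkFinite := by
    rw [IntermediateField.coe_restrictScalars, coe_algebraicClosure_adjoin_eq_matroid_closure]
    exact ((matroid k K).isRkFinite_of_finite hT).closure

theorem isDifferentiallyAlgebraic {D : K → K} {F : Subfield K} {L : IntermediateField F K}
    (hL : IsDiffStableOfFiniteTrdeg D L) {b : K} (hb : b ∈ L) :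
    IsDifferentiallyAlgebraic D F b := by
  rw [isDifferentiallyAlgebraic_iff_not_algebraicIndependent]
  intro independent
  have range_subset : Set.range (fun n : ℕ ↦ D^[n] b) ⊆ L := by
    rintro _ ⟨n, rfl⟩
    exact Set.MapsTo.iterate (fun _ ↦ hL.map_mem) n hb
  have range_finite := hL.isRkFinite.finite_of_indep_subset
    (AlgebraicIndependent.matroid_indep_iff.2 independent.coe_range) range_subset
  exact Set.infinite_range_of_injective independent.injective range_finite

end IsDiffStableOfFiniteTrdeg

theorem IsDifferentiallyAlgebraic.exists_isDiffStableOfFiniteTrdeg [CharZero K]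
    {D : Derivation ℤ K K} {F : Subfield K} (hF : ∀ x ∈ F, D x ∈ F) {b : K}
    (hb : IsDifferentiallyAlgebraic D F b) :
    ∃ L : IntermediateField F K, IsDiffStableOfFiniteTrdeg D L ∧ b ∈ L := by
  obtain ⟨n, hn⟩ := exists_isAlgebraic_adjoin_image_Iio
    (isDifferentiallyAlgebraic_iff_not_algebraicIndependent.1 hb)
  let T : Set K := (fun i ↦ D^[i] b) '' Set.Iio n
  have iterate_mem {i : ℕ} (hi : i ≤ n) :
      D^[i] b ∈ algebraicClosure (IntermediateField.adjoin F T) K := by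
    rcases hi.eq_or_lt with rfl | hi
    · exact mem_algebraicClosure_iff.2 (IntermediateField.isAlgebraic_adjoin_iff.2 hn)
    · exact le_restrictScalars_algebraicClosure _
        (IntermediateField.subset_adjoin F T ⟨i, hi, rfl⟩)
  refine ⟨_, .algebraicClosure_adjoin (T := T) ((Set.finite_Iio n).image _)
    (fun a ↦ IntermediateField.mem_bot.2 ⟨⟨_, hF a a.2⟩, rfl⟩) ?_, iterate_mem (Nat.zero_le n)⟩
  rintro _ ⟨i, hi, rfl⟩
  simpa only [Function.iterate_succ_apply'] using iterate_mem (Nat.succ_le_of_lt hi)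

theorem IsDifferentiallyAlgebraic.exists_common_isDiffStableOfFiniteTrdeg [CharZero K]
    {D : Derivation ℤ K K} {F : Subfield K} (hF : ∀ x ∈ F, D x ∈ F) {b c : K}
    (hb : IsDifferentiallyAlgebraic D F b) (hc : IsDifferentiallyAlgebraic D F c) :
    ∃ L : IntermediateField F K, IsDiffStableOfFiniteTrdeg D L ∧ b ∈ L ∧ c ∈ L := by
  obtain ⟨L, hL, hbL⟩ := hb.exists_isDiffStableOfFiniteTrdeg hF
  obtain ⟨L', hL', hcL'⟩ := hc.exists_isDiffStableOfFiniteTrdeg hF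
  exact ⟨L ⊔ L', hL.sup hL', le_sup_left (a := L) hbL, le_sup_right (a := L) hcL'⟩

end FiniteTranscendenceDegree

/-- The set `L = {b ∈ K : b is differentially algebraic over F}` is a differential
subfield of `K` containing `F`: it contains `F` and is closed under addition,
multiplication, negation, inversion of nonzero elements, and the derivation `D`. -/
theorem diffAlgebraic_elements_form_differential_subfield {K : Type*} [Field K] [CharZero K]
    (D : K → K)
    (hD_add : ∀ x y : K, D (x + y) = D x + D y)
    (hD_mul : ∀ x y : K, D (x * y) = x * D y + y * D x)
    (F : Subfield K) (hF : ∀ x ∈ F, D x ∈ F) :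
    (∀ x ∈ F, IsDifferentiallyAlgebraic D F x) ∧
    (∀ x y : K, IsDifferentiallyAlgebraic D F x → IsDifferentiallyAlgebraic D F y →
      IsDifferentiallyAlgebraic D F (x + y)) ∧
    (∀ x y : K, IsDifferentiallyAlgebraic D F x → IsDifferentiallyAlgebraic D F y →
      IsDifferentiallyAlgebraic D F (x * y)) ∧
    (∀ x : K, IsDifferentiallyAlgebraic D F x → IsDifferentiallyAlgebraic D F (-x)) ∧
    (∀ x : K, IsDifferentiallyAlgebraic D F x → x ≠ 0 → IsDifferentiallyAlgebraic D F x⁻¹) ∧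
    (∀ x : K, IsDifferentiallyAlgebraic D F x → IsDifferentiallyAlgebraic D F (D x)) := by
  obtain ⟨D, rfl⟩ : ∃ 𝒟 : Derivation ℤ K K, ⇑𝒟 = D :=
    ⟨.mk' (AddMonoidHom.mk' D hD_add).toIntLinearMap hD_mul, rfl⟩
  refine ⟨fun x hx ↦ ?_, fun x y hx hy ↦ ?_, fun x y hx hy ↦ ?_, fun x hx ↦ ?_,
    fun x hx _ ↦ ?_, fun x hx ↦ ?_⟩
  · have hbot : IsDiffStableOfFiniteTrdeg D (⊥ : IntermediateField F K) :=
      .bot fun a ↦ IntermediateField.mem_bot.2 ⟨⟨_, hF a a.2⟩, rfl⟩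
    exact hbot.isDifferentiallyAlgebraic (IntermediateField.algebraMap_mem _ (⟨x, hx⟩ : F))
  · obtain ⟨L, hL, hxL, hyL⟩ := hx.exists_common_isDiffStableOfFiniteTrdeg hF hy
    exact hL.isDifferentiallyAlgebraic (L.add_mem hxL hyL)
  · obtain ⟨L, hL, hxL, hyL⟩ := hx.exists_common_isDiffStableOfFiniteTrdeg hF hy
    exact hL.isDifferentiallyAlgebraic (L.mul_mem hxL hyL)
  · obtain ⟨L, hL, hxL⟩ := hx.exists_isDiffStableOfFiniteTrdeg hF
    exact hL.isDifferentiallyAlgebraic (L.neg_mem hxL)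
  · obtain ⟨L, hL, hxL⟩ := hx.exists_isDiffStableOfFiniteTrdeg hF
    exact hL.isDifferentiallyAlgebraic (L.inv_mem hxL)
  · obtain ⟨L, hL, hxL⟩ := hx.exists_isDiffStableOfFiniteTrdeg hF
    exact hL.isDifferentiallyAlgebraic (hL.map_mem hxL)
end

section
/- Every function A : ℂ → ℂ meromorphic on ℂ satisfying the functional equation A(z) + A(z−1) = Γ(z+1) for every z ∈ ℂ at which A(z), A(z−1), and Γ(z+1) are all analytic, is differentially transcendental. -/
/-- A function `f : ℂ → ℂ` (meromorphic on `ℂ`) is differentially algebraic over `ℂ(z)`: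
there are `n ∈ ℕ` and a nonzero polynomial `P ∈ ℂ[X₀, …, X_{n+1}]` such that
`P (z, f z, f' z, …, f⁽ⁿ⁾ z) = 0` at every point `z` where `f` is analytic. -/
def DifferentiallyAlgebraic (f : ℂ → ℂ) : Prop :=
  ∃ (n : ℕ) (P : MvPolynomial (Fin (n + 2)) ℂ),
    P ≠ 0 ∧ ∀ z : ℂ, AnalyticAt ℂ f z →
      MvPolynomial.eval
        (fun i : Fin (n + 2) => if i.val = 0 then z else iteratedDeriv (i.val - 1) f z) P = 0

/-!
Differentially algebraic elements of a differential domain are those lying in a differential field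
of finite transcendence degree, so they are closed under sums, quotients and derivation. Taking
Taylor series, if `A` were differentially algebraic then so would be `Γ(z + 1) = A(z) + A(z - 1)`,
and hence the digamma function `ψ = Γ' / Γ`.

To exclude this (Hölder's theorem), note that `ψ⁽ⁱ⁾(z + 1) = ψ⁽ⁱ⁾(z) + (-1)ⁱ i! / z ^ (i + 1)`. By
the Kolchin–Ostrowski argument, an algebraic relation over `ℂ(z)` between the `ψ⁽ⁱ⁾` yields one of
minimal degree that is invariant under the shift and affine, that is, a rational function `u` with
`u(z + 1) - u(z) = ∑ cᵢ / z ^ (i + 1)` for some 1-periodic rational functions `cᵢ`, not all zero.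
But `u` has only finitely many poles and the right-hand side has exactly one pole in `ℤ`, at `0`,
which is impossible: away from `0` the equation propagates a pole of `u` at an integer along a whole
half-line of `ℤ`.
-/

section AlgebraicElements

open Set Algebra

variable {S R : Type*} [CommRing S] [CommRing R] [Algebra S R]

theorem exists_aeval_eq_zero_aeval_derivative_ne_zero [IsDomain S] [CharZero S]
    [FaithfulSMul S R] {y : R} (hy : IsAlgebraic S y) :
    ∃ f : Polynomial S, f.aeval y = 0 ∧ f.derivative.aeval y ≠ 0 := by
  obtain ⟨f, ⟨hf, hfy⟩, hmin⟩ := exists_minimalFor_of_wellFoundedLT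
    (fun f : Polynomial S ↦ f ≠ 0 ∧ f.aeval y = 0) (·.natDegree) hy
  have hdeg : f.natDegree ≠ 0 := fun hdeg ↦ by
    obtain ⟨c, rfl⟩ := Polynomial.natDegree_eq_zero.mp hdeg
    rw [Polynomial.aeval_C, FaithfulSMul.algebraMap_eq_zero_iff] at hfy
    exact hf (by rw [hfy, map_zero])
  have hlt := Polynomial.natDegree_derivative_lt hdeg
  refine ⟨f, hfy, fun hder ↦ hlt.not_ge (hmin ⟨?_, hder⟩ hlt.le)⟩
  exact fun h ↦ hdeg (Polynomial.derivative_eq_zero.mp h)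

theorem finite_of_algebraicIndependent_of_isAlgebraic_adjoin [FaithfulSMul S R] [IsDomain R]
    {ι : Type*} {T : Set R} (hT : T.Finite) {y : ι → R}
    (hy : AlgebraicIndependent S y) (halg : ∀ i, IsAlgebraic (adjoin S T) (y i)) : Finite ι := by
  have : Nontrivial S := (algebraMap S R).domain_nontrivial
  have hrank : (AlgebraicIndependent.matroid S R).IsRkFinite _ :=
    (Matroid.isRkFinite_of_finite _ hT).closure
  have hsub : range y ⊆ (AlgebraicIndependent.matroid S R).closure T := by
    rw [AlgebraicIndependent.matroid_closure_eq]
    exact range_subset_iff.mpr halg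
  have hfin := hrank.finite_of_indep_subset
    (AlgebraicIndependent.matroid_indep_iff.mpr hy.coe_range) hsub
  exact (finite_range_iff hy.injective).mp hfin

theorem exists_isAlgebraic_adjoin_image_Iic {e : ℕ → R} (h0 : Transcendental S (e 0))
    (he : ¬ AlgebraicIndependent S e) :
    ∃ m, IsAlgebraic (adjoin S (e '' Iic m)) (e (m + 1)) := by
  by_contra! htrans
  have hindep (m : ℕ) : AlgebraicIndepOn S e (Iic m) := by
    induction m with
    | zero =>
      have : Subsingleton (Iic 0 : Set ℕ) := by rw [← bot_eq_zero, Iic_bot]; infer_instance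
      exact (algebraicIndependent_singleton_iff (⟨0, self_mem_Iic⟩ : Iic 0)).mpr h0
    | succ m ih =>
      rw [← Order.succ_eq_add_one, Order.Iic_succ]
      exact ih.insert (htrans m)
  refine he (algebraicIndependent_of_finite_type fun t ht ↦ ?_)
  obtain ⟨m, hm⟩ := ht.bddAbove
  exact (hindep m).mono hm

end AlgebraicElements

section DifferentialAlgebra

open Set Algebra

variable {k R : Type*} [Field k] [CommRing R] [Algebra k R] {D : Derivation k R R}

variable (D) in
/-- `x` is differentially algebraic for the derivation `D`: it lies in a differential field of
finite transcendence degree over the constants `k`. That field is encoded, inside the domain `R`,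
as the set of elements algebraic over `k[T]` for a finite set `T`. -/
def IsDiffAlgebraic (x : R) : Prop :=
  ∃ T : Set R, T.Finite ∧ (∀ t ∈ T, IsAlgebraic (adjoin k T) (D t)) ∧ IsAlgebraic (adjoin k T) x

theorem IsDiffAlgebraic.exists_isAlgebraic_and_isAlgebraic {x y : R}
    (hx : IsDiffAlgebraic D x) (hy : IsDiffAlgebraic D y) :
    ∃ T : Set R, T.Finite ∧ (∀ t ∈ T, IsAlgebraic (adjoin k T) (D t)) ∧
      IsAlgebraic (adjoin k T) x ∧ IsAlgebraic (adjoin k T) y := by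
  obtain ⟨T, hT, hDT, hx⟩ := hx
  obtain ⟨T', hT', hDT', hy⟩ := hy
  have left {z : R} (hz : IsAlgebraic (adjoin k T) z) : IsAlgebraic (adjoin k (T ∪ T')) z :=
    hz.tower_top_of_subalgebra_le (adjoin_mono subset_union_left)
  have right {z : R} (hz : IsAlgebraic (adjoin k T') z) : IsAlgebraic (adjoin k (T ∪ T')) z :=
    hz.tower_top_of_subalgebra_le (adjoin_mono subset_union_right)
  refine ⟨T ∪ T', hT.union hT', ?_, left hx, right hy⟩
  rintro t (ht | ht)
  · exact left (hDT t ht)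
  · exact right (hDT' t ht)

variable [IsDomain R]

theorem isAlgebraic_derivation_of_mem_adjoin {T : Set R}
    (hT : ∀ t ∈ T, IsAlgebraic (adjoin k T) (D t)) {y : R} (hy : y ∈ adjoin k T) :
    IsAlgebraic (adjoin k T) (D y) := by
  have hself {x : R} (hx : x ∈ adjoin k T) : IsAlgebraic (adjoin k T) x :=
    isAlgebraic_algebraMap (⟨x, hx⟩ : adjoin k T)
  induction hy using adjoin_induction with
  | mem x hx => exact hT x hx
  | algebraMap r => simpa only [Derivation.map_algebraMap] using isAlgebraic_zero
  | add x y _ _ hx hy => simpa only [map_add] using hx.add hy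
  | mul x y hx hy hDx hDy =>
    simpa only [Derivation.leibniz, smul_eq_mul] using
      ((hself hx).mul hDy).add ((hself hy).mul hDx)

theorem isAlgebraic_derivation_aeval_sub {S : Subalgebra k R}
    (hS : ∀ s ∈ S, IsAlgebraic S (D s)) {y : R} (hy : IsAlgebraic S y) (f : Polynomial S) :
    IsAlgebraic S (D (f.aeval y) - f.derivative.aeval y * D y) := by
  induction f using Polynomial.induction_on' with
  | add p q hp hq =>
    convert hp.add hq using 1
    simp only [map_add]
    ring
  | monomial n a =>
    convert (hS a a.2).mul (hy.pow n) using 1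
    simp only [Polynomial.aeval_monomial, Polynomial.derivative_monomial, Derivation.leibniz,
      Derivation.leibniz_pow, map_mul, map_natCast, smul_eq_mul, nsmul_eq_mul,
      Subalgebra.algebraMap_apply]
    ring

theorem isAlgebraic_derivation [CharZero k] {S : Subalgebra k R}
    (hS : ∀ s ∈ S, IsAlgebraic S (D s)) {y : R} (hy : IsAlgebraic S y) : IsAlgebraic S (D y) := by
  have : CharZero S := charZero_of_injective_algebraMap (FaithfulSMul.algebraMap_injective k S)
  obtain ⟨f, hfy, hder⟩ := exists_aeval_eq_zero_aeval_derivative_ne_zero hy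
  have hprod : IsAlgebraic S (f.derivative.aeval y * D y) := by
    simpa only [hfy, map_zero, zero_sub, neg_neg] using
      (isAlgebraic_derivation_aeval_sub hS hy f).neg
  have hcoeff : f.derivative.aeval y ∈ Subalgebra.algebraicClosure S R :=
    adjoin_singleton_le hy (f.derivative.aeval_mem_adjoin_singleton S y)
  exact hcoeff.of_mul (mem_nonZeroDivisors_of_ne_zero hder) hprod

theorem transcendental_of_derivation_eq_one [CharZero k] {ζ : R} (hζ : D ζ = 1) :
    Transcendental k ζ := by
  intro halg
  obtain ⟨f, hf, hder⟩ := exists_aeval_eq_zero_aeval_derivative_ne_zero halg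
  have h := D.map_aeval f ζ
  rw [hf, map_zero, hζ, smul_eq_mul, mul_one] at h
  exact hder h.symm

theorem isDiffAlgebraic_of_not_algebraicIndependent [CharZero k] {e : ℕ → R} (h0 : D (e 0) = 1)
    (hsucc : ∀ i, D (e (i + 1)) = e (i + 2)) (he : ¬ AlgebraicIndependent k e) :
    IsDiffAlgebraic D (e 1) := by
  obtain ⟨m, hm⟩ :=
    exists_isAlgebraic_adjoin_image_Iic (transcendental_of_derivation_eq_one h0) he
  have hle {i : ℕ} (hi : i ≤ m + 1) : IsAlgebraic (adjoin k (e '' Iic m)) (e i) := by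
    obtain rfl | hi := hi.eq_or_lt
    · exact hm
    · have hmem : e i ∈ adjoin k (e '' Iic m) :=
        subset_adjoin (mem_image_of_mem e (Nat.lt_succ_iff.mp hi))
      exact isAlgebraic_algebraMap (⟨e i, hmem⟩ : adjoin k (e '' Iic m))
  refine ⟨e '' Iic m, (finite_Iic m).image e, ?_, hle (by lia)⟩
  rintro _ ⟨_ | i, hi, rfl⟩
  · exact h0 ▸ isAlgebraic_one
  · exact hsucc i ▸ hle (Nat.succ_le_succ hi)

namespace IsDiffAlgebraic

variable {x y : R}

theorem derivation [CharZero k] (hx : IsDiffAlgebraic D x) : IsDiffAlgebraic D (D x) := by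
  obtain ⟨T, hT, hDT, hx⟩ := hx
  exact ⟨T, hT, hDT, isAlgebraic_derivation (fun _ ↦ isAlgebraic_derivation_of_mem_adjoin hDT) hx⟩

theorem add (hx : IsDiffAlgebraic D x) (hy : IsDiffAlgebraic D y) : IsDiffAlgebraic D (x + y) := by
  obtain ⟨T, hT, hDT, hx, hy⟩ := hx.exists_isAlgebraic_and_isAlgebraic hy
  exact ⟨T, hT, hDT, hx.add hy⟩

theorem of_mul (hx0 : x ≠ 0) (hx : IsDiffAlgebraic D x) (hxy : IsDiffAlgebraic D (x * y)) :
    IsDiffAlgebraic D y := by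
  obtain ⟨T, hT, hDT, hx, hxy⟩ := hx.exists_isAlgebraic_and_isAlgebraic hxy
  exact ⟨T, hT, hDT, hx.of_mul (mem_nonZeroDivisors_of_ne_zero hx0) hxy⟩

theorem not_algebraicIndependent_iterate [CharZero k] (hx : IsDiffAlgebraic D x) :
    ¬ AlgebraicIndependent k fun i : ℕ ↦ D^[i] x := by
  obtain ⟨T, hT, hDT, hx⟩ := hx
  refine fun hindep ↦ (finite_of_algebraicIndependent_of_isAlgebraic_adjoin hT hindep ?_).false
  intro i
  induction i with
  | zero => exact hx
  | succ i ih =>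
    rw [Function.iterate_succ_apply']
    exact isAlgebraic_derivation (fun _ ↦ isAlgebraic_derivation_of_mem_adjoin hDT) ih

end IsDiffAlgebraic

end DifferentialAlgebra

section DifferenceAlgebra

open MvPolynomial MonomialOrder

theorem totalDegree_pderiv_le {ι R : Type*} [CommSemiring R] (P : MvPolynomial ι R) (i : ι) :
    (pderiv i P).totalDegree ≤ P.totalDegree - 1 := by
  refine Finset.sup_le fun d hd ↦ ?_
  have hmem : d + Finsupp.single i 1 ∈ P.support := by
    rw [mem_support_iff, coeff_pderiv] at hd
    exact mem_support_iff.mpr (left_ne_zero_of_mul hd)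
  have := le_totalDegree hmem
  rw [Finsupp.sum_add_index' (fun _ ↦ rfl) (fun _ _ _ ↦ rfl), Finsupp.sum_single_index rfl] at this
  lia

theorem eq_C_of_forall_pderiv_eq_zero {ι R : Type*} [CommRing R] [NoZeroDivisors R] [CharZero R]
    {P : MvPolynomial ι R} (hP : ∀ i, pderiv i P = 0) : P = C (constantCoeff P) := by
  classical
  ext d
  rw [coeff_C]
  split_ifs with hd
  · rw [← hd, constantCoeff_eq]
  obtain ⟨i, hi⟩ := Finsupp.ne_iff.mp (Ne.symm hd)
  have hcoeff := coeff_pderiv P (i := i) (d - Finsupp.single i 1)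
  have hle : Finsupp.single i 1 ≤ d :=
    Finsupp.single_le_iff.mpr (Nat.one_le_iff_ne_zero.mpr hi)
  rw [hP, coeff_zero, tsub_add_cancel_of_le hle] at hcoeff
  exact (mul_eq_zero.mp hcoeff.symm).resolve_right (Nat.cast_add_one_ne_zero _)

theorem exists_eq_C_add_sum_of_pderiv_eq_C {ι R : Type*} [CommRing R] [NoZeroDivisors R]
    [CharZero R] {P : MvPolynomial ι R} {c : ι → R} (hc : ∀ i, pderiv i P = C (c i)) :
    ∃ b, P = C b + ∑ i ∈ P.vars, C (c i) * X i := by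
  classical
  refine ⟨_, sub_eq_iff_eq_add.mp (eq_C_of_forall_pderiv_eq_zero fun j ↦ ?_)⟩
  have hsum : pderiv j (∑ i ∈ P.vars, C (c i) * X i) = if j ∈ P.vars then C (c j) else 0 := by
    simp [pderiv_X, Pi.single_apply]
  rw [map_sub, hsum]
  split_ifs with hj
  · rw [hc, sub_self]
  · rw [pderiv_eq_zero_of_notMem_vars hj, sub_zero]

variable {K ι : Type*} [Field K]

/-- The ring endomorphism of `K[X_i | i ∈ ι]` that acts on coefficients through `σ` and sends
`X i` to `X i + r i`. It models the effect of `σ` on elements `y i` with `σ (y i) = y i + r i`. -/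
noncomputable def twistedTranslation (σ : K →+* K) (r : ι → K) :
    MvPolynomial ι K →+* MvPolynomial ι K :=
  eval₂Hom (C.comp σ) fun i ↦ X i + C (r i)

variable {σ : K →+* K} {r : ι → K}

theorem twistedTranslation_C (a : K) : twistedTranslation σ r (C a) = C (σ a) :=
  eval₂Hom_C ..

theorem twistedTranslation_X (i : ι) : twistedTranslation σ r (X i) = X i + C (r i) :=
  eval₂Hom_X' ..

theorem twistedTranslation_monomial (d : ι →₀ ℕ) (a : K) :
    twistedTranslation σ r (monomial d a) = C (σ a) * ∏ i ∈ d.support, (X i + C (r i)) ^ d i :=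
  eval₂Hom_monomial ..

theorem pderiv_twistedTranslation (i : ι) (P : MvPolynomial ι K) :
    pderiv i (twistedTranslation σ r P) = twistedTranslation σ r (pderiv i P) := by
  classical
  induction P using MvPolynomial.induction_on with
  | C a => simp only [twistedTranslation_C, pderiv_C, map_zero]
  | add p q hp hq => simp only [map_add, hp, hq]
  | mul_X p j hp =>
    simp only [map_mul, map_add, twistedTranslation_X, pderiv_mul, hp, pderiv_X, pderiv_C,
      add_zero]
    obtain rfl | hij := eq_or_ne j i
    · simp
    · simp [hij]

theorem coeff_twistedTranslation_monomial_of_le (m : MonomialOrder ι) {c d : ι →₀ ℕ}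
    (hcd : c ≼[m] d) (a : K) :
    (twistedTranslation σ r (monomial c a)).coeff d = σ ((monomial c a).coeff d) := by
  classical
  set Q : MvPolynomial ι K := ∏ i ∈ c.support, (X i + C (r i)) ^ c i
  have hmonic : m.Monic Q := .prod fun i _ ↦ (m.monic_X_add_C i (r i)).pow
  have hdeg : m.degree Q = c := by
    rw [m.degree_prod fun i _ ↦ ((m.monic_X_add_C i (r i)).pow).ne_zero]
    simp only [m.degree_pow, m.degree_X_add_C, Finsupp.smul_single, smul_eq_mul, mul_one]
    exact c.sum_single
  have hmap : twistedTranslation σ r (monomial c a) = C (σ a) * Q := twistedTranslation_monomial c a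
  rw [hmap, coeff_C_mul, coeff_monomial]
  split_ifs with h
  · have hlead : Q.coeff d = 1 := h ▸ hdeg ▸ hmonic
    rw [hlead, mul_one]
  · have hlt : m.degree Q ≺[m] d := hdeg.symm ▸ hcd.lt_of_ne (m.toSyn.injective.ne h)
    rw [m.coeff_eq_zero_of_lt hlt, mul_zero, map_zero]

theorem coeff_twistedTranslation_of_degree_le (m : MonomialOrder ι) {P : MvPolynomial ι K}
    {d : ι →₀ ℕ} (hd : m.degree P ≼[m] d) :
    (twistedTranslation σ r P).coeff d = σ (P.coeff d) := by
  calc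
    _ = ∑ c ∈ P.support, (twistedTranslation σ r (monomial c (P.coeff c))).coeff d := by
      conv_lhs => rw [P.as_sum, map_sum, coeff_sum]
    _ = ∑ c ∈ P.support, σ ((monomial c (P.coeff c)).coeff d) := Finset.sum_congr rfl fun c hc ↦
      coeff_twistedTranslation_monomial_of_le m ((m.le_degree hc).trans hd) _
    _ = σ (P.coeff d) := by
      rw [← map_sum, ← coeff_sum, ← P.as_sum]

theorem twistedTranslation_sub_eq_zero_or_degree_lt (m : MonomialOrder ι) {P : MvPolynomial ι K}
    (hP : m.Monic P) :
    twistedTranslation σ r P - P = 0 ∨ m.degree (twistedTranslation σ r P - P) ≺[m] m.degree P := by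
  refine or_iff_not_imp_right.mpr fun hlt ↦ ?_
  have hle := le_of_not_gt hlt
  rw [← m.leadingCoeff_eq_zero_iff, leadingCoeff, coeff_sub,
    coeff_twistedTranslation_of_degree_le m hle, sub_eq_zero]
  obtain heq | hlt := hle.eq_or_lt
  · have hlead : P.coeff (m.degree P) = 1 := hP
    rw [← m.toSyn.injective heq, hlead, map_one]
  · rw [m.coeff_eq_zero_of_lt hlt, map_zero]

theorem nonempty_monomialOrder.{u} (ι : Type u) : Nonempty (MonomialOrder.{u, u} ι) := by
  obtain ⟨_, _⟩ := exists_wellFoundedLT ι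
  exact ⟨(MonomialOrder.lex : MonomialOrder ιᵒᵈ)⟩

theorem exists_twistedTranslation_eq_self_of_mem_ideal {I : Ideal (MvPolynomial ι K)}
    (hbot : I ≠ ⊥) (htop : I ≠ ⊤) (hI : ∀ P ∈ I, twistedTranslation σ r P ∈ I) :
    ∃ P : MvPolynomial ι K, P.totalDegree ≠ 0 ∧ twistedTranslation σ r P = P := by
  obtain ⟨m⟩ := nonempty_monomialOrder ι
  obtain ⟨P, ⟨hPI, hP0⟩, hmin⟩ := exists_minimalFor_of_wellFoundedLT
    (fun P ↦ P ∈ I ∧ P ≠ 0) (fun P ↦ m.toSyn (m.degree P)) (I.ne_bot_iff.mp hbot)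
  have hlead : m.leadingCoeff P ≠ 0 := m.leadingCoeff_ne_zero_iff.mpr hP0
  set Q := C (m.leadingCoeff P)⁻¹ * P
  have hQI : Q ∈ I := I.mul_mem_left _ hPI
  have hQ : m.Monic Q := by
    rw [Monic, m.leadingCoeff_mul, m.leadingCoeff_C, inv_mul_cancel₀ hlead]
  have hdeg : m.degree Q = m.degree P := by
    rw [m.degree_mul (C_ne_zero.mpr (inv_ne_zero hlead)) hP0, m.degree_C, zero_add]
  refine ⟨Q, fun h0 ↦ htop ?_, sub_eq_zero.mp ?_⟩
  · have hone : Q = 1 := by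
      rw [m.eq_C_of_degree_eq_zero (m.degree_eq_zero_iff_totalDegree_eq_zero.mpr h0),
        hQ.leadingCoeff_eq_one, map_one]
    exact I.eq_top_of_isUnit_mem hQI (hone ▸ isUnit_one)
  · by_contra hne
    have hlt := (twistedTranslation_sub_eq_zero_or_degree_lt m hQ).resolve_left hne
    rw [hdeg] at hlt
    exact hlt.not_ge (hmin ⟨I.sub_mem (hI Q hQI) hQI, hne⟩ hlt.le)

theorem exists_affine_of_twistedTranslation_eq_self {P : MvPolynomial ι K}
    (hdeg : P.totalDegree ≠ 0) (hP : twistedTranslation σ r P = P) :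
    ∃ Q : MvPolynomial ι K, Q.totalDegree ≠ 0 ∧ twistedTranslation σ r Q = Q ∧
      ∀ i, ∃ c, pderiv i Q = C c := by
  obtain ⟨Q, ⟨hdeg, hQ⟩, hmin⟩ := exists_minimalFor_of_wellFoundedLT
    (fun Q : MvPolynomial ι K ↦ Q.totalDegree ≠ 0 ∧ twistedTranslation σ r Q = Q)
    totalDegree ⟨P, hdeg, hP⟩
  refine ⟨Q, hdeg, hQ, fun i ↦ ⟨_, totalDegree_eq_zero_iff_eq_C.mp ?_⟩⟩
  by_contra hne
  have hlt : (pderiv i Q).totalDegree < Q.totalDegree := by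
    have := totalDegree_pderiv_le Q i
    lia
  have hinv : twistedTranslation σ r (pderiv i Q) = pderiv i Q := by
    rw [← pderiv_twistedTranslation, hQ]
  exact hlt.not_ge (hmin ⟨hne, hinv⟩ hlt.le)

theorem exists_sub_eq_sum_of_twistedTranslation_eq_self [CharZero K] {P : MvPolynomial ι K}
    (hdeg : P.totalDegree ≠ 0) (hP : twistedTranslation σ r P = P) :
    ∃ (s : Finset ι) (c : ι → K) (u : K), (∀ i, σ (c i) = c i) ∧ (∃ i ∈ s, c i ≠ 0) ∧
      σ u - u = ∑ i ∈ s, c i * r i := by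
  obtain ⟨Q, hdeg, hQ, hder⟩ := exists_affine_of_twistedTranslation_eq_self hdeg hP
  choose c hc using hder
  obtain ⟨b, hb⟩ := exists_eq_C_add_sum_of_pderiv_eq_C hc
  have hfix (i : ι) : σ (c i) = c i := by
    apply C_injective ι K
    rw [← twistedTranslation_C (r := r), ← hc, ← pderiv_twistedTranslation, hQ]
  refine ⟨Q.vars, c, -b, hfix, ?_, C_injective ι K ?_⟩
  · by_contra! hzero
    rw [Finset.sum_eq_zero fun i hi ↦ by rw [hzero i hi, map_zero, zero_mul], add_zero] at hb
    exact hdeg (by rw [hb, totalDegree_C])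
  · have hinv := hQ
    rw [hb] at hinv
    simp only [map_add, map_sum, map_mul, twistedTranslation_C, twistedTranslation_X, hfix,
      mul_add, Finset.sum_add_distrib] at hinv
    simp only [map_neg, map_sub, map_sum, map_mul]
    linear_combination -hinv

/-- The additive case of the Kolchin–Ostrowski theorem for difference rings. -/
theorem algebraicIndependent_of_forall_sub_eq_sum [CharZero K] {L : Type*} [CommRing L]
    [Nontrivial L] [Algebra K L] {s : L →+* L} {y : ι → L}
    (hs : ∀ a, s (algebraMap K L a) = algebraMap K L (σ a))
    (hy : ∀ i, s (y i) = y i + algebraMap K L (r i))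
    (hr : ∀ (t : Finset ι) (c : ι → K) (u : K), (∀ i, σ (c i) = c i) →
      σ u - u = ∑ i ∈ t, c i * r i → ∀ i ∈ t, c i = 0) :
    AlgebraicIndependent K y := by
  have hcomm (P : MvPolynomial ι K) : s (aeval y P) = aeval y (twistedTranslation σ r P) := by
    induction P using MvPolynomial.induction_on with
    | C a => rw [twistedTranslation_C, algHom_C, algHom_C, hs]
    | add p q hp hq => simp only [map_add, hp, hq]
    | mul_X p i hp => simp only [map_mul, map_add, hp, twistedTranslation_X, aeval_X, hy, algHom_C]
  by_contra hdep
  rw [AlgebraicIndependent, RingHom.injective_iff_ker_eq_bot] at hdep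
  obtain ⟨P, hdeg, hP⟩ := exists_twistedTranslation_eq_self_of_mem_ideal hdep
    (RingHom.ker_ne_top _) fun P hP ↦ by
      rw [RingHom.mem_ker] at hP ⊢
      exact (hcomm P).symm.trans (by rw [hP, map_zero])
  obtain ⟨t, c, u, hc, ⟨i, hi, hne⟩, hu⟩ := exists_sub_eq_sum_of_twistedTranslation_eq_self hdeg hP
  exact hne (hr t c u hc hu i hi)

end DifferenceAlgebra

section Valuation

variable {K Γ₀ : Type*} [Field K] [LinearOrderedCommGroupWithZero Γ₀] {v : Valuation K Γ₀}

theorem valuation_sub_le_one_of_forall_ne_zero {x : ℤ → K} (hfin : {n | 1 < v (x n)}.Finite)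
    (hx : ∀ n ≠ 0, v (x (n + 1) - x n) ≤ 1) : v (x 1 - x 0) ≤ 1 := by
  have hnonpos : ∀ n ≤ 0, v (x n) ≤ 1 := by
    by_contra! ⟨n, hn, hvn⟩
    obtain ⟨m, ⟨hm, hvm⟩, hmin⟩ :=
      Set.exists_min_image _ id (hfin.inter_of_right (Set.Iic 0)) ⟨n, hn, hvn⟩
    have hpred : v (x (m - 1)) ≤ 1 := not_lt.mp fun h ↦
      (sub_one_lt m).not_ge (hmin (m - 1) ⟨(sub_one_lt m).le.trans hm, h⟩)
    have hstep : v (x m - x (m - 1)) ≤ 1 := by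
      simpa using hx (m - 1) ((sub_one_lt m).trans_le hm).ne
    exact hvm.not_ge (by simpa using v.map_add_le hstep hpred)
  have hpos : ∀ n ≥ 1, v (x n) ≤ 1 := by
    by_contra! ⟨n, hn, hvn⟩
    obtain ⟨m, ⟨hm, hvm⟩, hmax⟩ :=
      Set.exists_max_image _ id (hfin.inter_of_right (Set.Ici 1)) ⟨n, hn, hvn⟩
    have hsucc : v (x (m + 1)) ≤ 1 := not_lt.mp fun h ↦
      (lt_add_one m).not_ge (hmax (m + 1) ⟨hm.trans (lt_add_one m).le, h⟩)
    have hstep : v (x (m + 1) - x m) ≤ 1 := hx m (zero_lt_one.trans_le hm).ne'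
    exact hvm.not_ge (by simpa using v.map_sub_le hsucc hstep)
  exact v.map_sub_le (hpos 1 le_rfl) (hnonpos 0 le_rfl)

theorem eq_zero_of_valuation_sum_mul_pow_le_one {t : K} (ht : 1 < v t) {s : Finset ℕ} {c : ℕ → K}
    (hc : ∀ i ∈ s, c i ≠ 0 → v (c i) = 1) (hsum : v (∑ i ∈ s, c i * t ^ (i + 1)) ≤ 1) :
    ∀ i ∈ s, c i = 0 := by
  classical
  by_contra! hne
  obtain ⟨j, hj, hmax⟩ :=
    (s.filter (c · ≠ 0)).exists_max_image id (Finset.filter_nonempty_iff.mpr hne)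
  obtain ⟨hjs, hcj⟩ := Finset.mem_filter.mp hj
  have hvj : v (c j * t ^ (j + 1)) = v t ^ (j + 1) := by
    rw [map_mul, map_pow, hc j hjs hcj, one_mul]
  have hlt : ∀ i ∈ s \ {j}, v (c i * t ^ (i + 1)) < v (c j * t ^ (j + 1)) := by
    intro i hi
    obtain ⟨his, hij⟩ := Finset.mem_sdiff.mp hi
    rw [hvj, map_mul, map_pow]
    by_cases hci : c i = 0
    · rw [hci, map_zero, zero_mul]
      exact pow_pos (zero_lt_one.trans ht) _
    · rw [hc i his hci, one_mul]
      have hle : i ≤ j := hmax i (Finset.mem_filter.mpr ⟨his, hci⟩)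
      have hne : i ≠ j := by simpa using hij
      exact pow_lt_pow_right₀ ht (by lia)
  rw [v.map_sum_eq_of_lt hjs hlt, hvj] at hsum
  exact hsum.not_gt (one_lt_pow₀ ht j.succ_ne_zero)

end Valuation

section RationalFunctions

open Polynomial

variable {F : Type*} [Field F]

theorem valuation_idealX_algebraMap_eq_one_iff {p : F[X]} :
    (idealX F).valuation (RatFunc F) (algebraMap F[X] (RatFunc F) p) = 1 ↔ p.eval 0 ≠ 0 := by
  have hlt := (idealX F).valuation_lt_one_iff_dvd (K := RatFunc F) p
  rw [idealX_span, Ideal.dvd_span_singleton, Ideal.mem_span_singleton, X_dvd_iff,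
    coeff_zero_eq_eval_zero] at hlt
  rw [Ne, ← hlt, not_lt]
  exact ((idealX F).valuation_le_one (K := RatFunc F) p).ge_iff_eq.symm

theorem finite_setOf_valuation_laurent_ne_one [CharZero F] {u : RatFunc F} (hu : u ≠ 0) :
    {n : ℤ | (idealX F).valuation (RatFunc F) (RatFunc.laurent (n : F) u) ≠ 1}.Finite := by
  have hpoly : ∀ p : F[X], p ≠ 0 → {n : ℤ | p.eval (n : F) = 0}.Finite := fun p hp ↦
    (p.finite_setOfPred_isRoot hp).preimage (Int.cast_injective (α := F)).injOn
  refine ((hpoly _ (RatFunc.num_ne_zero hu)).union (hpoly _ u.denom_ne_zero)).subset fun n hn ↦ ?_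
  by_contra hroot
  rw [Set.mem_union, not_or] at hroot
  have htaylor : ∀ p : F[X], p.eval (n : F) ≠ 0 → (taylor (n : F) p).eval 0 ≠ 0 := by
    simp [taylor_eval]
  apply hn
  rw [← RatFunc.num_div_denom u, RatFunc.laurent_div, map_div₀,
    valuation_idealX_algebraMap_eq_one_iff.mpr (htaylor _ hroot.1),
    valuation_idealX_algebraMap_eq_one_iff.mpr (htaylor _ hroot.2), div_one]

theorem laurent_natCast_of_laurent_one_eq_self {c : RatFunc F} (hc : RatFunc.laurent 1 c = c)
    (n : ℕ) : RatFunc.laurent (n : F) c = c := by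
  induction n with
  | zero => rw [Nat.cast_zero, RatFunc.laurent_at_zero]
  | succ n ih => rw [Nat.cast_succ, ← RatFunc.laurent_laurent, hc, ih]

theorem laurent_intCast_of_laurent_one_eq_self {c : RatFunc F} (hc : RatFunc.laurent 1 c = c)
    (n : ℤ) : RatFunc.laurent (n : F) c = c := by
  obtain ⟨m, rfl | rfl⟩ := n.eq_nat_or_neg
  · exact_mod_cast laurent_natCast_of_laurent_one_eq_self hc m
  · apply RatFunc.laurent_injective (m : F)
    rw [RatFunc.laurent_laurent, laurent_natCast_of_laurent_one_eq_self hc]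
    simp

theorem valuation_eq_one_of_laurent_one_eq_self [CharZero F] {c : RatFunc F} (hc0 : c ≠ 0)
    (hc : RatFunc.laurent 1 c = c) : (idealX F).valuation (RatFunc F) c = 1 := by
  obtain ⟨n, hn⟩ := (finite_setOf_valuation_laurent_ne_one hc0).exists_notMem
  rw [Set.notMem_ofPred_iff, not_not, laurent_intCast_of_laurent_one_eq_self hc] at hn
  exact hn

theorem valuation_laurent_inv_X_eq_one {a : F} (ha : a ≠ 0) :
    (idealX F).valuation (RatFunc F) (RatFunc.laurent a RatFunc.X⁻¹) = 1 := by
  have h : (idealX F).valuation (RatFunc F) (algebraMap F[X] _ (X + C a)) = 1 :=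
    valuation_idealX_algebraMap_eq_one_iff.mpr (by simpa using ha)
  rw [map_inv₀, RatFunc.laurent_X, map_inv₀, inv_eq_one]
  simpa using h

theorem one_lt_valuation_inv_X : 1 < (idealX F).valuation (RatFunc F) RatFunc.X⁻¹ := by
  rw [map_inv₀, valuation_X_eq_neg_one, ← WithZero.exp_neg, neg_neg]
  exact WithZero.exp_zero.symm.trans_lt (WithZero.exp_lt_exp.mpr zero_lt_one)

theorem eq_zero_of_laurent_one_sub_eq_sum [CharZero F] {s : Finset ℕ} {c : ℕ → RatFunc F}
    {u : RatFunc F} (hc : ∀ i, RatFunc.laurent 1 (c i) = c i)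
    (hu : RatFunc.laurent 1 u - u = ∑ i ∈ s, c i * RatFunc.X⁻¹ ^ (i + 1)) :
    ∀ i ∈ s, c i = 0 := by
  have hv : ∀ i, c i ≠ 0 → (idealX F).valuation (RatFunc F) (c i) = 1 := fun i hi ↦
    valuation_eq_one_of_laurent_one_eq_self hi (hc i)
  have hvle : ∀ i, (idealX F).valuation (RatFunc F) (c i) ≤ 1 := fun i ↦ by
    by_cases hi : c i = 0
    · simp [hi]
    · exact (hv i hi).le
  have hstep : ∀ n : ℤ, RatFunc.laurent ((n + 1 : ℤ) : F) u - RatFunc.laurent (n : F) u =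
      ∑ i ∈ s, c i * RatFunc.laurent (n : F) RatFunc.X⁻¹ ^ (i + 1) := fun n ↦ by
    have h := congrArg (RatFunc.laurent (n : F)) hu
    simpa only [map_sub, map_sum, map_mul, map_pow, RatFunc.laurent_laurent, Int.cast_add,
      Int.cast_one, laurent_intCast_of_laurent_one_eq_self (hc _)] using h
  have hfin :
      {n : ℤ | 1 < (idealX F).valuation (RatFunc F) (RatFunc.laurent (n : F) u)}.Finite := by
    by_cases hu0 : u = 0
    · simp [hu0]
    · exact (finite_setOf_valuation_laurent_ne_one hu0).subset fun n hn ↦ ne_of_gt hn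
  refine eq_zero_of_valuation_sum_mul_pow_le_one one_lt_valuation_inv_X (fun i _ ↦ hv i) ?_
  rw [← hu]
  have htelescope := valuation_sub_le_one_of_forall_ne_zero hfin fun n hn ↦ by
    rw [hstep]
    refine Valuation.map_sum_le _ fun i _ ↦ ?_
    rw [map_mul, map_pow, valuation_laurent_inv_X_eq_one (Int.cast_ne_zero.mpr hn), one_pow,
      mul_one]
    exact hvle i
  simpa using htelescope

end RationalFunctions

section SequenceGerms

open Filter

open scoped Polynomial

variable {F : Type*} [Field F]

/-- The endomorphism `y ↦ (n ↦ y (n + 1))` of the ring of germs at infinity of sequences. -/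
def germShift : Germ (atTop : Filter ℕ) F →+* Germ (atTop : Filter ℕ) F where
  toFun y := y.compTendsto (· + 1) (tendsto_add_atTop_nat 1)
  map_one' := rfl
  map_zero' := rfl
  map_mul' f g := Germ.inductionOn₂ f g fun _ _ ↦ rfl
  map_add' f g := Germ.inductionOn₂ f g fun _ _ ↦ rfl

/-- The germ at infinity of the sequence of values `n ↦ p(n)` of a polynomial `p`. -/
noncomputable def polynomialGerm : F[X] →+* Germ (atTop : Filter ℕ) F :=
  (Germ.coeRingHom atTop).comp (RingHom.pi fun n : ℕ ↦ Polynomial.evalRingHom (n : F))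

variable [CharZero F]

theorem isUnit_polynomialGerm {p : F[X]} (hp : p ≠ 0) : IsUnit (polynomialGerm p) := by
  refine IsUnit.of_mul_eq_one ((fun n : ℕ ↦ (p.eval (n : F))⁻¹ : ℕ → F) : Germ _ F)
    (Germ.coe_eq.mpr ?_)
  have hfin : {n : ℕ | p.eval (n : F) = 0}.Finite :=
    (p.finite_setOfPred_isRoot hp).preimage (Nat.cast_injective (R := F)).injOn
  have hne : ∀ᶠ n : ℕ in atTop, p.eval (n : F) ≠ 0 :=
    Nat.cofinite_eq_atTop ▸ hfin.eventually_cofinite_notMem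
  filter_upwards [hne] with n hn using mul_inv_cancel₀ hn

/-- The germ at infinity of the sequence of values `n ↦ u(n)` of a rational function `u`. -/
noncomputable def ratFuncGerm : RatFunc F →+* Germ (atTop : Filter ℕ) F :=
  IsLocalization.lift (M := nonZeroDivisors F[X]) (g := polynomialGerm) fun p ↦
    isUnit_polynomialGerm (nonZeroDivisors.coe_ne_zero p)

theorem ratFuncGerm_algebraMap (p : F[X]) :
    ratFuncGerm (algebraMap F[X] (RatFunc F) p) = polynomialGerm p :=
  IsLocalization.lift_eq _ p

theorem ratFuncGerm_C (a : F) : ratFuncGerm (RatFunc.C a) = (↑fun _ : ℕ ↦ a : Germ _ F) := by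
  rw [← RatFunc.algebraMap_C, ratFuncGerm_algebraMap]
  exact congrArg _ (funext fun n ↦ Polynomial.eval_C)

theorem ratFuncGerm_X : ratFuncGerm RatFunc.X = (↑fun n : ℕ ↦ (n : F) : Germ _ F) := by
  rw [← RatFunc.algebraMap_X, ratFuncGerm_algebraMap]
  exact congrArg _ (funext fun n ↦ Polynomial.eval_X)

theorem ratFuncGerm_laurent_one (u : RatFunc F) :
    ratFuncGerm (RatFunc.laurent 1 u) = germShift (ratFuncGerm u) := by
  suffices h : ratFuncGerm.comp (RatFunc.laurent 1 : RatFunc F →ₐ[F] RatFunc F).toRingHom =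
      germShift.comp ratFuncGerm from RingHom.congr_fun h u
  refine IsLocalization.ringHom_ext (nonZeroDivisors F[X]) (RingHom.ext fun p ↦ ?_)
  have hp : polynomialGerm (Polynomial.taylor 1 p) = germShift (polynomialGerm p) :=
    congrArg _ (funext fun n : ℕ ↦ by simp [Polynomial.taylor_eval])
  simpa [ratFuncGerm_algebraMap] using hp

theorem ratFuncGerm_C_mul_inv_X_pow (b : F) (k : ℕ) :
    ratFuncGerm (RatFunc.C b * RatFunc.X⁻¹ ^ k) = (↑fun n : ℕ ↦ b / (n : F) ^ k : Germ _ F) := by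
  have hunit : IsUnit (ratFuncGerm (RatFunc.X ^ k : RatFunc F)) :=
    (isUnit_iff_ne_zero.mpr (pow_ne_zero k RatFunc.X_ne_zero)).map ratFuncGerm
  refine hunit.mul_right_cancel ?_
  rw [← map_mul, inv_pow, inv_mul_cancel_right₀ (pow_ne_zero k RatFunc.X_ne_zero), ratFuncGerm_C,
    map_pow, ratFuncGerm_X]
  refine Germ.coe_eq.mpr ?_
  filter_upwards [eventually_ne_atTop 0] with n hn
  exact (div_mul_cancel₀ b (pow_ne_zero k (Nat.cast_ne_zero.mpr hn))).symm

theorem eval₂_ratFuncGerm_comp_C {ι : Type*} (y : ι → ℕ → F) (P : MvPolynomial ι F) :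
    P.eval₂ (ratFuncGerm.comp RatFunc.C) (fun i ↦ (y i : Germ (atTop : Filter ℕ) F)) =
      (↑fun n ↦ P.eval (y · n) : Germ (atTop : Filter ℕ) F) := by
  induction P using MvPolynomial.induction_on with
  | C a =>
    simp only [MvPolynomial.eval₂_C, RingHom.comp_apply, ratFuncGerm_C, MvPolynomial.eval_C]
  | add p q hp hq =>
    simp only [MvPolynomial.eval₂_add, map_add, hp, hq]
    rfl
  | mul_X p i hp =>
    simp only [MvPolynomial.eval₂_mul, map_mul, hp, MvPolynomial.eval₂_X, MvPolynomial.eval_X]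
    rfl

theorem eq_zero_of_eventually_eval_eq_zero_of_add_one_eq {b : ℕ → F} (hb : ∀ i, b i ≠ 0)
    {y : ℕ → ℕ → F}
    (hy : ∀ i, ∀ᶠ n : ℕ in atTop, y i (n + 1) = y i n + b i / (n : F) ^ (i + 1))
    {P : MvPolynomial ℕ F} (hP : ∀ᶠ n in atTop, P.eval (y · n) = 0) : P = 0 := by
  let : Algebra (RatFunc F) (Germ (atTop : Filter ℕ) F) := ratFuncGerm.toAlgebra
  have hindep : AlgebraicIndependent (RatFunc F)
      fun i ↦ (y i : Germ (atTop : Filter ℕ) F) := by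
    refine algebraicIndependent_of_forall_sub_eq_sum (s := germShift)
      (σ := (RatFunc.laurent 1 : RatFunc F →ₐ[F] RatFunc F).toRingHom)
      (r := fun i ↦ RatFunc.C (b i) * RatFunc.X⁻¹ ^ (i + 1))
      (fun u ↦ (ratFuncGerm_laurent_one u).symm) (fun i ↦ ?_) fun t c u hc hu i hi ↦ ?_
    · rw [RingHom.algebraMap_toAlgebra, ratFuncGerm_C_mul_inv_X_pow]
      exact Germ.coe_eq.mpr (hy i)
    · simp only [← mul_assoc] at hu
      have hcb := eq_zero_of_laurent_one_sub_eq_sum (c := fun i ↦ c i * RatFunc.C (b i))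
        (fun j ↦ by rw [map_mul, RatFunc.laurent_C]; exact congrArg (· * _) (hc j)) hu i hi
      exact (mul_eq_zero.mp hcb).resolve_right ((map_ne_zero RatFunc.C).mpr (hb i))
  apply MvPolynomial.map_injective (RatFunc.C : F →+* RatFunc F) RatFunc.C_injective
  rw [map_zero]
  apply algebraicIndependent_iff.mp hindep
  rw [MvPolynomial.aeval_def, MvPolynomial.eval₂_map, RingHom.algebraMap_toAlgebra,
    eval₂_ratFuncGerm_comp_C]
  exact Germ.coe_eq.mpr hP

end SequenceGerms

section TaylorSeries

open Filter Topology

variable {𝕜 : Type*} [NontriviallyNormedField 𝕜]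

/-- The Taylor series at `z₀`, as a formal power series in `z - z₀`. In characteristic
zero it embeds the germs of analytic functions into a domain with a derivation. -/
noncomputable def taylorSeries (z₀ : 𝕜) (f : 𝕜 → 𝕜) : PowerSeries 𝕜 :=
  PowerSeries.mk fun n ↦ iteratedDeriv n f z₀ / n.factorial

variable {z₀ : 𝕜} {f g : 𝕜 → 𝕜}

theorem taylorSeries_congr (h : f =ᶠ[𝓝 z₀] g) : taylorSeries z₀ f = taylorSeries z₀ g := by
  ext n
  simp only [taylorSeries, PowerSeries.coeff_mk, h.iteratedDeriv_eq]

theorem taylorSeries_const (z₀ c : 𝕜) : taylorSeries z₀ (fun _ ↦ c) = PowerSeries.C c := by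
  ext n
  rw [taylorSeries, PowerSeries.coeff_mk, iteratedDeriv_const, PowerSeries.coeff_C]
  split_ifs with hn <;> simp [hn]

theorem taylorSeries_comp_add_const (z₀ : 𝕜) (f : 𝕜 → 𝕜) (c : 𝕜) :
    taylorSeries z₀ (fun z ↦ f (z + c)) = taylorSeries (z₀ + c) f := by
  ext n
  simp only [taylorSeries, PowerSeries.coeff_mk, iteratedDeriv_comp_add_const]

theorem taylorSeries_ne_zero (h : f z₀ ≠ 0) : taylorSeries z₀ f ≠ 0 := fun h0 ↦ h <| by
  simpa [taylorSeries] using congrArg (PowerSeries.coeff 0) h0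

section CharZero

variable [CharZero 𝕜]

theorem derivative_taylorSeries (z₀ : 𝕜) (f : 𝕜 → 𝕜) :
    PowerSeries.derivative 𝕜 (taylorSeries z₀ f) = taylorSeries z₀ (deriv f) := by
  ext n
  have hn : (n : 𝕜) + 1 ≠ 0 := Nat.cast_add_one_ne_zero n
  rw [PowerSeries.coeff_derivative]
  simp only [taylorSeries, PowerSeries.coeff_mk, iteratedDeriv_succ', Nat.factorial_succ]
  push_cast
  field_simp

theorem iterate_derivative_taylorSeries (z₀ : 𝕜) (f : 𝕜 → 𝕜) (n : ℕ) :
    (PowerSeries.derivative 𝕜)^[n] (taylorSeries z₀ f) = taylorSeries z₀ (iteratedDeriv n f) := by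
  induction n with
  | zero => simp
  | succ n ih => rw [Function.iterate_succ_apply', ih, derivative_taylorSeries, iteratedDeriv_succ]

end CharZero

variable [CompleteSpace 𝕜]

theorem analyticAt_iteratedDeriv (hf : AnalyticAt 𝕜 f z₀) (n : ℕ) :
    AnalyticAt 𝕜 (iteratedDeriv n f) z₀ := by
  rw [iteratedDeriv_eq_iterate]
  exact hf.iterated_deriv n

theorem taylorSeries_add (hf : AnalyticAt 𝕜 f z₀) (hg : AnalyticAt 𝕜 g z₀) :
    taylorSeries z₀ (fun z ↦ f z + g z) = taylorSeries z₀ f + taylorSeries z₀ g := by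
  ext n
  simp only [taylorSeries, PowerSeries.coeff_mk, map_add]
  rw [iteratedDeriv_fun_add hf.contDiffAt hg.contDiffAt, add_div]

variable [CharZero 𝕜]

theorem taylorSeries_mul (hf : AnalyticAt 𝕜 f z₀) (hg : AnalyticAt 𝕜 g z₀) :
    taylorSeries z₀ (fun z ↦ f z * g z) = taylorSeries z₀ f * taylorSeries z₀ g := by
  ext n
  rw [PowerSeries.coeff_mul, Finset.Nat.sum_antidiagonal_eq_sum_range_succ_mk]
  simp only [taylorSeries, PowerSeries.coeff_mk]
  rw [iteratedDeriv_fun_mul hf.contDiffAt hg.contDiffAt, Finset.sum_div]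
  refine Finset.sum_congr rfl fun i hi ↦ ?_
  have hfact (m : ℕ) : (m.factorial : 𝕜) ≠ 0 := Nat.cast_ne_zero.mpr m.factorial_ne_zero
  have := hfact n
  rw [Nat.cast_choose 𝕜 (Finset.mem_range_succ_iff.mp hi)]
  field_simp

theorem eventually_eq_zero_of_taylorSeries_eq_zero (hf : AnalyticAt 𝕜 f z₀)
    (h : taylorSeries z₀ f = 0) : ∀ᶠ z in 𝓝 z₀, f z = 0 := by
  have hcoeff (n : ℕ) : iteratedDeriv n f z₀ / n.factorial = 0 := by
    simpa [taylorSeries] using congrArg (PowerSeries.coeff n) h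
  have hseries := hf.hasFPowerSeriesAt
  have hzero : FormalMultilinearSeries.ofScalars 𝕜
      (fun n ↦ iteratedDeriv n f z₀ / n.factorial) = 0 :=
    funext fun n ↦ (FormalMultilinearSeries.ofScalars_eq_zero 𝕜 n).mpr (hcoeff n)
  rw [hzero] at hseries
  exact hseries.eventually_eq_zero

variable {ι : Type*} {f : ι → 𝕜 → 𝕜}

theorem taylorSeries_eval (hf : ∀ i, AnalyticAt 𝕜 (f i) z₀) (P : MvPolynomial ι 𝕜) :
    taylorSeries z₀ (fun z ↦ P.eval (f · z)) = P.aeval fun i ↦ taylorSeries z₀ (f i) := by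
  have han (p : MvPolynomial ι 𝕜) : AnalyticAt 𝕜 (fun z ↦ p.eval (f · z)) z₀ :=
    AnalyticAt.aeval_mvPolynomial hf p
  induction P using MvPolynomial.induction_on with
  | C a =>
    simp only [MvPolynomial.eval_C, MvPolynomial.aeval_C, taylorSeries_const,
      PowerSeries.algebraMap_eq]
  | add p q hp hq => simp only [map_add, taylorSeries_add (han p) (han q), hp, hq]
  | mul_X p i hp =>
    simp only [map_mul, MvPolynomial.eval_X, MvPolynomial.aeval_X, taylorSeries_mul (han p) (hf i),
      hp]

theorem algebraicIndependent_taylorSeries_iff (hf : ∀ i, AnalyticAt 𝕜 (f i) z₀) :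
    AlgebraicIndependent 𝕜 (fun i ↦ taylorSeries z₀ (f i)) ↔
      ∀ P : MvPolynomial ι 𝕜, (∀ᶠ z in 𝓝 z₀, P.eval (f · z) = 0) → P = 0 := by
  rw [algebraicIndependent_iff]
  refine forall_congr' fun P ↦ imp_congr_left ?_
  rw [← taylorSeries_eval hf]
  refine ⟨eventually_eq_zero_of_taylorSeries_eq_zero (AnalyticAt.aeval_mvPolynomial hf P),
    fun h ↦ ?_⟩
  rw [taylorSeries_congr h, taylorSeries_const, map_zero]

end TaylorSeries

section Transfer

open Filter Topology

theorem DifferentiallyAlgebraic.isDiffAlgebraic_taylorSeries {f : ℂ → ℂ}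
    (hf : DifferentiallyAlgebraic f) {z₀ : ℂ} (hz₀ : AnalyticAt ℂ f z₀) :
    IsDiffAlgebraic (PowerSeries.derivative ℂ) (taylorSeries z₀ f) := by
  obtain ⟨n, P, hP, hPf⟩ := hf
  set F : ℕ → ℂ → ℂ := fun i z ↦ if i = 0 then z else iteratedDeriv (i - 1) f z
  have hF (i : ℕ) : AnalyticAt ℂ (F i) z₀ := by
    cases i with
    | zero => exact analyticAt_id
    | succ i => exact analyticAt_iteratedDeriv hz₀ i
  have hdep : ¬ AlgebraicIndependent ℂ fun i ↦ taylorSeries z₀ (F i) := by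
    rw [algebraicIndependent_taylorSeries_iff hF]
    refine fun hindep ↦ hP (MvPolynomial.rename_injective _ Fin.val_injective ?_)
    rw [map_zero]
    refine hindep _ (hz₀.eventually_analyticAt.mono fun z hz ↦ ?_)
    rw [MvPolynomial.eval_rename]
    exact hPf z hz
  refine isDiffAlgebraic_of_not_algebraicIndependent (e := fun i ↦ taylorSeries z₀ (F i))
    ?_ (fun i ↦ ?_) hdep
  · rw [derivative_taylorSeries]
    have hderiv : deriv (F 0) = fun _ ↦ 1 := deriv_id'
    rw [hderiv, taylorSeries_const, map_one]
  · rw [derivative_taylorSeries]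
    exact congrArg _ iteratedDeriv_succ.symm

end Transfer

section Gamma

open Complex Filter Topology

theorem Gamma_ne_zero_iff {s : ℂ} : Gamma s ≠ 0 ↔ ∀ m : ℕ, s ≠ -m := by
  rw [Ne, Gamma_eq_zero_iff, not_exists]

theorem isOpen_setOf_Gamma_ne_zero : IsOpen {s : ℂ | Gamma s ≠ 0} := by
  simpa using isOpen_ne_fun differentiable_one_div_Gamma.continuous (continuous_const (y := 0))

theorem isPreconnected_setOf_Gamma_ne_zero : IsPreconnected {s : ℂ | Gamma s ≠ 0} := by
  have hcompl : {s : ℂ | Gamma s ≠ 0} = (Set.range fun m : ℕ ↦ -(m : ℂ))ᶜ := by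
    ext s
    simp [Gamma_ne_zero_iff, eq_comm]
  have hrank : 1 < Module.rank ℝ ℂ := by rw [rank_real_complex]; exact Nat.one_lt_ofNat
  rw [hcompl]
  exact ((Set.countable_range _).isPathConnected_compl_of_one_lt_rank hrank).isConnected.2

theorem eventually_nhdsNE_Gamma_ne_zero (s : ℂ) : ∀ᶠ z in 𝓝[≠] s, Gamma z ≠ 0 := by
  have han : AnalyticOnNhd ℂ (fun z ↦ (Gamma z)⁻¹) Set.univ := fun z _ ↦
    differentiable_one_div_Gamma.analyticAt z
  refine ((han s trivial).eventually_eq_zero_or_eventually_ne_zero.resolve_left fun hzero ↦ ?_).mono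
    fun z hz ↦ inv_eq_zero.not.mp hz
  simpa using han.eqOn_zero_of_preconnected_of_eventuallyEq_zero isPreconnected_univ trivial hzero
    (Set.mem_univ 1)

theorem analyticAt_Gamma {s : ℂ} (hs : Gamma s ≠ 0) : AnalyticAt ℂ Gamma s :=
  DifferentiableOn.analyticAt (s := {s | Gamma s ≠ 0})
    (fun z hz ↦ (differentiableAt_Gamma z (Gamma_ne_zero_iff.mp hz)).differentiableWithinAt)
    (isOpen_setOf_Gamma_ne_zero.mem_nhds hs)

theorem analyticAt_digamma {s : ℂ} (hs : Gamma s ≠ 0) : AnalyticAt ℂ digamma s :=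
  (analyticAt_Gamma hs).deriv.div (analyticAt_Gamma hs) hs

theorem iteratedDeriv_digamma_add_one {s : ℂ} (hs : Gamma s ≠ 0) (i : ℕ) :
    iteratedDeriv i digamma (s + 1) =
      iteratedDeriv i digamma s + (-1) ^ i * i.factorial / s ^ (i + 1) := by
  have hs0 : s ≠ 0 := by simpa using Gamma_ne_zero_iff.mp hs 0
  have hfe : (fun z ↦ digamma (z + 1)) =ᶠ[𝓝 s] fun z ↦ digamma z + z⁻¹ := by
    filter_upwards [isOpen_setOf_Gamma_ne_zero.mem_nhds hs] with z hz
    exact digamma_apply_add_one z (Gamma_ne_zero_iff.mp hz)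
  have hinv : iteratedDeriv i (fun z : ℂ ↦ z⁻¹) s = (-1) ^ i * i.factorial / s ^ (i + 1) := by
    rw [iteratedDeriv_eq_iterate]
    refine (iter_deriv_inv i s).trans ?_
    rw [div_eq_mul_inv, ← zpow_natCast s, ← zpow_neg, Nat.cast_add_one, neg_add']
    congr 2
    ring
  calc iteratedDeriv i digamma (s + 1) = iteratedDeriv i (fun z ↦ digamma (z + 1)) s := by
        rw [iteratedDeriv_comp_add_const]
    _ = iteratedDeriv i (fun z ↦ digamma z + z⁻¹) s := hfe.iteratedDeriv_eq i
    _ = _ := by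
        rw [iteratedDeriv_fun_add (analyticAt_digamma hs).contDiffAt
          (analyticAt_inv hs0).contDiffAt, hinv]

theorem algebraicIndependent_taylorSeries_iteratedDeriv_digamma {s : ℂ} (hs : Gamma s ≠ 0) :
    AlgebraicIndependent ℂ fun i ↦ taylorSeries s (iteratedDeriv i digamma) := by
  have han {z : ℂ} (hz : Gamma z ≠ 0) (i : ℕ) : AnalyticAt ℂ (iteratedDeriv i digamma) z :=
    analyticAt_iteratedDeriv (analyticAt_digamma hz) i
  rw [algebraicIndependent_taylorSeries_iff (han hs)]
  intro P hP
  have hP' : Set.EqOn (fun z ↦ P.eval (iteratedDeriv · digamma z)) 0 {z | Gamma z ≠ 0} :=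
    AnalyticOnNhd.eqOn_zero_of_preconnected_of_eventuallyEq_zero
      (fun z hz ↦ AnalyticAt.aeval_mvPolynomial (han hz) P)
      isPreconnected_setOf_Gamma_ne_zero hs hP
  have hnat : ∀ᶠ n : ℕ in atTop, Gamma (n : ℂ) ≠ 0 := by
    filter_upwards [eventually_gt_atTop 0] with n hn
    exact Gamma_ne_zero_of_re_pos (by simpa using hn)
  refine eq_zero_of_eventually_eval_eq_zero_of_add_one_eq (b := fun i ↦ (-1 : ℂ) ^ i * i.factorial)
    (fun i ↦ by simp [Nat.factorial_ne_zero]) (y := fun i n ↦ iteratedDeriv i digamma n)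
    (fun i ↦ ?_) ?_
  · filter_upwards [hnat] with n hn
    exact_mod_cast iteratedDeriv_digamma_add_one hn i
  · filter_upwards [hnat] with n hn using hP' hn

theorem not_isDiffAlgebraic_taylorSeries_Gamma {s : ℂ} (hs : Gamma s ≠ 0) :
    ¬ IsDiffAlgebraic (PowerSeries.derivative ℂ) (taylorSeries s Gamma) := by
  intro hΓ
  have hlog : PowerSeries.derivative ℂ (taylorSeries s Gamma) =
      taylorSeries s Gamma * taylorSeries s digamma := by
    rw [derivative_taylorSeries, ← taylorSeries_mul (analyticAt_Gamma hs) (analyticAt_digamma hs)]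
    refine taylorSeries_congr ?_
    filter_upwards [isOpen_setOf_Gamma_ne_zero.mem_nhds hs] with z hz
    exact (mul_div_cancel₀ _ hz).symm
  have hψ : IsDiffAlgebraic (PowerSeries.derivative ℂ) (taylorSeries s digamma) :=
    .of_mul (taylorSeries_ne_zero hs) hΓ (hlog ▸ hΓ.derivation)
  refine hψ.not_algebraicIndependent_iterate ?_
  simpa only [iterate_derivative_taylorSeries] using
    algebraicIndependent_taylorSeries_iteratedDeriv_digamma hs

end Gamma

section AlternatingKurepa

open Complex Filter Topology

theorem not_differentiallyAlgebraic_of_eventually_add_eq_Gamma {A : ℂ → ℂ} {z₀ : ℂ}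
    (hA : AnalyticAt ℂ A z₀) (hA' : AnalyticAt ℂ A (z₀ - 1)) (hΓ : Gamma (z₀ + 1) ≠ 0)
    (hfe : ∀ᶠ z in 𝓝 z₀, A z + A (z - 1) = Gamma (z + 1)) : ¬ DifferentiallyAlgebraic A := by
  intro hDA
  have hshift : AnalyticAt ℂ (fun z ↦ A (z - 1)) z₀ :=
    hA'.comp_of_eq (analyticAt_id.sub analyticAt_const) rfl
  have hsum : taylorSeries (z₀ + 1) Gamma = taylorSeries z₀ A + taylorSeries (z₀ - 1) A := by
    rw [← taylorSeries_comp_add_const, ← taylorSeries_congr hfe, taylorSeries_add hA hshift]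
    simp only [sub_eq_add_neg, taylorSeries_comp_add_const]
  apply not_isDiffAlgebraic_taylorSeries_Gamma hΓ
  rw [hsum]
  exact (hDA.isDiffAlgebraic_taylorSeries hA).add (hDA.isDiffAlgebraic_taylorSeries hA')

theorem alternatingKurepa_diffTranscendental_general (A : ℂ → ℂ) (z₀ : ℂ)
    (hA : MeromorphicAt A z₀) (hA' : MeromorphicAt A (z₀ - 1))
    (hfe : ∀ᶠ z in 𝓝[≠] z₀, AnalyticAt ℂ A z → AnalyticAt ℂ A (z - 1) →
      AnalyticAt ℂ Gamma (z + 1) → A z + A (z - 1) = Gamma (z + 1)) :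
    ¬ DifferentiallyAlgebraic A := by
  have htendsto (c : ℂ) : Tendsto (· + c) (𝓝[≠] z₀) (𝓝[≠] (z₀ + c)) :=
    (continuous_add_const c).continuousAt.continuousWithinAt.tendsto_nhdsWithin
      fun z hz ↦ by simpa using hz
  have hgood : ∀ᶠ z in 𝓝[≠] z₀, AnalyticAt ℂ A z ∧ AnalyticAt ℂ A (z - 1) ∧ Gamma (z + 1) ≠ 0 ∧
      A z + A (z - 1) = Gamma (z + 1) := by
    filter_upwards [hA.eventually_analyticAt, (htendsto (-1)).eventually hA'.eventually_analyticAt,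
      (htendsto 1).eventually (eventually_nhdsNE_Gamma_ne_zero _), hfe] with z hz hz' hΓ hfez
    exact ⟨hz, hz', hΓ, hfez hz hz' (analyticAt_Gamma hΓ)⟩
  obtain ⟨z₁, hz₁⟩ := (eventually_nhdsNE_eventually_nhds_iff.mpr hgood).exists
  obtain ⟨hz, hz', hΓ, -⟩ := hz₁.self_of_nhds
  exact not_differentiallyAlgebraic_of_eventually_add_eq_Gamma hz hz' hΓ
    (hz₁.mono fun z h ↦ h.2.2.2)

end AlternatingKurepa

/-- Every function meromorphic on ℂ satisfying the alternating Kurepa functional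
equation `A z + A (z-1) = Γ (z+1)` (wherever all three terms are analytic) is
differentially transcendental. -/
theorem alternatingKurepa_diffTranscendental (A : ℂ → ℂ)
    (hmero : MeromorphicOn A Set.univ)
    (hfe : ∀ z : ℂ, AnalyticAt ℂ A z → AnalyticAt ℂ A (z - 1) →
      AnalyticAt ℂ Complex.Gamma (z + 1) → A z + A (z - 1) = Complex.Gamma (z + 1)) :
    ¬ DifferentiallyAlgebraic A := by
  exact alternatingKurepa_diffTranscendental_general A 0 (hmero 0 trivial) (hmero _ trivial)
    (.of_forall hfe)
end
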